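/- Let p be a prime, R a δ-ring, I an ideal of R containing p, and f : R → R' a δ-homomorphism of δ-rings whose underlying ring homomorphism is I-adically étale. Let S be a δ-ring, g' : R' → S a ring homomorphism, and g = g'∘f. If g is a δ-homomorphism and S is g(I)-adically separated (i.e. the intersection of the powers of the ideal g(I)S is zero), then g' is a δ-homomorphism. -/

import Mathlib

/-- A δ-structure on a commutative ring `R`, relative to a prime `p`. -/
structure DeltaStructure (p : ℕ) (R : Type*) [CommRing R] where
  δ : R → R
  delta_zero : δ 0 = 0
  delta_one : δ 1 = 0
  delta_add : ∀ x y : R, δ (x + y) =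
    δ x + δ y - ∑ i ∈ Finset.Ioo 0 p, ((p.choose i / p : ℕ) : R) * x ^ i * y ^ (p - i)
  delta_mul : ∀ x y : R, δ (x * y) =
    δ x * y ^ p + x ^ p * δ y + (p : R) * δ x * δ y

universe u

/-!
The defect `d = δ ∘ g' - g' ∘ δ` is additive, vanishes on `f(R)` and satisfies
`d(xy) = g'(φ x) d(y) + φ(g' y) d(x)`, where `φ x = x ^ p + p δ(x)`. The ring homomorphisms
`g' ∘ φ` and `φ ∘ g'` agree modulo `p`, which lies in `J = g(I)S`; hence once `d` takes values in
`J ^ n`, it is modulo `J ^ (n + 1)` an ordinary `R`-derivation for the `R'`-module structure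
given by `g' ∘ φ`. Since `R'/IR'` is unramified over `R/I`, the Kähler differentials `Ω` of `R'`
over `R` satisfy `Ω = IΩ`, so `d` takes values in `J ^ (n + 1)`. Separatedness gives `d = 0`.
-/

section DeltaDefect

variable {p : ℕ} {A S : Type*} [CommRing A] [CommRing S]

/-- The Frobenius lift `φ x = x ^ p + p * δ x` attached to a δ-structure. -/
def DeltaStructure.frobenius (D : DeltaStructure p A) (hp : p.Prime) : A →+* A where
  toFun x := x ^ p + p * D.δ x
  map_one' := by rw [one_pow, D.delta_one, mul_zero, add_zero]
  map_zero' := by rw [zero_pow hp.ne_zero, D.delta_zero, mul_zero, add_zero]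
  map_mul' x y := by rw [D.delta_mul]; ring
  map_add' x y := by
    have binomial : (x + y) ^ p = x ^ p + y ^ p +
        p * ∑ i ∈ Finset.Ioo 0 p, ((p.choose i / p : ℕ) : A) * x ^ i * y ^ (p - i) := by
      rw [add_pow_prime_eq hp, mul_assoc (p : A), mul_assoc (p : A), Finset.mul_sum]
      congr 2
      refine Finset.sum_congr rfl fun i hi => ?_
      obtain ⟨hi0, hip⟩ := Finset.mem_Ioo.mp hi
      rw [← mul_pow_sub_one hi0.ne' x, ← mul_pow_sub_one (Nat.sub_ne_zero_of_lt hip) y]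
      ring
    rw [D.delta_add, binomial]
    ring

theorem DeltaStructure.frobenius_apply (D : DeltaStructure p A) (hp : p.Prime) (x : A) :
    D.frobenius hp x = x ^ p + p * D.δ x :=
  rfl

theorem DeltaStructure.frobenius_mem (D : DeltaStructure p A) (hp : p.Prime) {I : Ideal A}
    (hpI : (p : A) ∈ I) {x : A} (hx : x ∈ I) : D.frobenius hp x ∈ I :=
  I.add_mem (I.pow_mem_of_mem hx p hp.pos) (I.mul_mem_right _ hpI)

/-- The failure `x ↦ δ (g x) - g (δ x)` of a ring homomorphism between δ-rings to commute with
the δ-structures. It is additive because `δ (x + y) - δ x - δ y` is a polynomial in `x` and `y`. -/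
def deltaDefect (DA : DeltaStructure p A) (DS : DeltaStructure p S) (g : A →+* S) : A →+ S where
  toFun x := DS.δ (g x) - g (DA.δ x)
  map_zero' := by rw [map_zero, DS.delta_zero, DA.delta_zero, map_zero, sub_zero]
  map_add' x y := by
    simp only [map_add, DS.delta_add, DA.delta_add, map_sub, map_sum, map_mul, map_pow,
      map_natCast]
    ring

variable (DA : DeltaStructure p A) (DS : DeltaStructure p S) (g : A →+* S)

theorem deltaDefect_apply (x : A) : deltaDefect DA DS g x = DS.δ (g x) - g (DA.δ x) :=
  rfl

theorem deltaDefect_mul (hp : p.Prime) (x y : A) :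
    deltaDefect DA DS g (x * y) = g (DA.frobenius hp x) * deltaDefect DA DS g y +
      DS.frobenius hp (g y) * deltaDefect DA DS g x := by
  simp only [deltaDefect_apply, DeltaStructure.frobenius_apply, map_mul, DS.delta_mul,
    DA.delta_mul, map_add, map_pow, map_natCast]
  ring

theorem frobenius_map_sub_map_frobenius (hp : p.Prime) (x : A) :
    DS.frobenius hp (g x) - g (DA.frobenius hp x) = p * deltaDefect DA DS g x := by
  simp only [deltaDefect_apply, DeltaStructure.frobenius_apply, map_add, map_mul, map_pow,
    map_natCast]
  ring

end DeltaDefect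

section UnramifiedModIdeal

open scoped TensorProduct

variable {R A : Type*} [CommRing R] [CommRing A] [Algebra R A] (I : Ideal R)
  [Algebra.FormallyUnramified (R ⧸ I) (A ⧸ I.map (algebraMap R A))]

theorem ideal_smul_top_kaehlerDifferential : I • (⊤ : Submodule R Ω[A⁄R]) = ⊤ := by
  let : Algebra A ((R ⧸ I) ⊗[R] A) := Algebra.TensorProduct.rightAlgebra
  have : Algebra.FormallyUnramified (R ⧸ I) ((R ⧸ I) ⊗[R] A) :=
    .of_equiv (Algebra.TensorProduct.quotIdealMapEquivQuotTensor A I)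
  have : Subsingleton ((R ⧸ I) ⊗[R] Ω[A⁄R]) :=
    (KaehlerDifferential.tensorKaehlerEquivBase R (R ⧸ I) A ((R ⧸ I) ⊗[R] A)).subsingleton
  exact Submodule.Quotient.subsingleton_iff.mp
    (TensorProduct.quotTensorEquivQuotSMul Ω[A⁄R] I).symm.subsingleton

theorem derivation_mem_ideal_smul {M : Type*} [AddCommGroup M] [Module A M] [Module R M]
    [IsScalarTower R A M] (D : Derivation R A M) (N : Submodule A M) (hD : ∀ a, D a ∈ N) (a : A) :
    D a ∈ I • N.restrictScalars R := by
  let ℓ : Ω[A⁄R] →ₗ[A] M := D.liftKaehlerDifferential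
  have range_le : ⊤ ≤ N.comap ℓ := by
    rw [← KaehlerDifferential.span_range_derivation, Submodule.span_le]
    rintro _ ⟨b, rfl⟩
    rw [SetLike.mem_coe, Submodule.mem_comap, D.liftKaehlerDifferential_comp_D]
    exact hD b
  have top_le : ⊤ ≤ (I • N.restrictScalars R).comap (ℓ.restrictScalars R) := by
    rw [← ideal_smul_top_kaehlerDifferential I, Submodule.smul_le]
    intro r hr ω _
    rw [Submodule.mem_comap, map_smul]
    exact Submodule.smul_mem_smul hr (range_le (Submodule.mem_top (x := ω)))
  rw [← D.liftKaehlerDifferential_comp_D a]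
  exact top_le Submodule.mem_top

variable {S : Type*} [CommRing S] [Algebra R S] [Algebra A S] [IsScalarTower R A S]
  {J : Ideal S} {d : A →+ S} {τ : A → S}

theorem twistedDerivation_mem_pow_succ (hIJ : I.map (algebraMap R S) ≤ J)
    (hτ : ∀ a, τ a - algebraMap A S a ∈ J)
    (hmul : ∀ a b, d (a * b) = algebraMap A S a * d b + τ b * d a)
    (hbase : ∀ r, d (algebraMap R A r) = 0) {n : ℕ} (hd : ∀ a, d a ∈ J ^ n) (a : A) :
    d a ∈ J ^ (n + 1) := by
  let π : S →ₐ[A] S ⧸ J ^ (n + 1) := Ideal.Quotient.mkₐ A (J ^ (n + 1))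
  have leibniz (a b : A) : π (d (a * b)) = a • π (d b) + b • π (d a) := by
    have twist : (τ b - algebraMap A S b) * d a ∈ J ^ (n + 1) := by
      rw [pow_succ']
      exact Ideal.mul_mem_mul (hτ b) (hd a)
    rw [← map_smul π, ← map_smul π, ← map_add π, Ideal.Quotient.mkₐ_eq_mk, Ideal.Quotient.eq, hmul,
      Algebra.smul_def, Algebra.smul_def, add_sub_add_left_eq_sub, ← sub_mul]
    exact twist
  let ℓ : A →ₗ[R] S ⧸ J ^ (n + 1) :=
    { toFun a := π (d a)
      map_add' a b := by rw [map_add, map_add]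
      map_smul' r a := by
        rw [Algebra.smul_def, leibniz, hbase, map_zero, smul_zero, add_zero, algebraMap_smul,
          RingHom.id_apply] }
  let D : Derivation R A (S ⧸ J ^ (n + 1)) := .mk' ℓ leibniz
  let N : Submodule A (S ⧸ J ^ (n + 1)) := ((J ^ n).restrictScalars A).map π.toLinearMap
  have smul_N_le : I • N.restrictScalars R ≤ ⊥ := by
    refine Submodule.smul_le.mpr ?_
    rintro r hr _ ⟨s, hs, rfl⟩
    have hrs : algebraMap R S r * s ∈ J ^ (n + 1) := by
      rw [pow_succ']
      exact Ideal.mul_mem_mul (hIJ (Ideal.mem_map_of_mem _ hr)) hs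
    rw [Submodule.mem_bot, ← algebraMap_smul A, ← map_smul, algebraMap_smul, Algebra.smul_def]
    exact Ideal.Quotient.eq_zero_iff_mem.mpr hrs
  have hDa : D a ∈ I • N.restrictScalars R :=
    derivation_mem_ideal_smul I D N (fun b => Submodule.mem_map_of_mem (hd b)) a
  exact Ideal.Quotient.eq_zero_iff_mem.mp ((Submodule.mem_bot R).mp (smul_N_le hDa))

theorem twistedDerivation_mem_pow (hIJ : I.map (algebraMap R S) ≤ J)
    (hτ : ∀ a, τ a - algebraMap A S a ∈ J)
    (hmul : ∀ a b, d (a * b) = algebraMap A S a * d b + τ b * d a)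
    (hbase : ∀ r, d (algebraMap R A r) = 0) (n : ℕ) (a : A) : d a ∈ J ^ n := by
  induction n generalizing a with
  | zero => rw [pow_zero, Ideal.one_eq_top]; trivial
  | succ n ih => exact twistedDerivation_mem_pow_succ I hIJ hτ hmul hbase ih a

end UnramifiedModIdeal

theorem delta_hom_of_etale_general {p : ℕ} (hp : p.Prime) {R R' S : Type*} [CommRing R]
    [CommRing R'] [CommRing S] (DR : DeltaStructure p R) (DR' : DeltaStructure p R')
    (DS : DeltaStructure p S) (I : Ideal R) (hpI : (p : R) ∈ I)
    (f : R →+* R') (hf : ∀ x : R, DR'.δ (f x) = f (DR.δ x))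
    (hunramified :
      (Ideal.quotientMap (I.map f) f Ideal.le_comap_map : R ⧸ I →+* _).FormallyUnramified)
    (g' : R' →+* S) (hg : ∀ x : R, DS.δ ((g'.comp f) x) = (g'.comp f) (DR.δ x))
    (hsep : ∀ x : S, (∀ n : ℕ, x ∈ (I.map (g'.comp f)) ^ n) → x = 0) (x : R') :
    DS.δ (g' x) = g' (DR'.δ x) := by
  let σ : R' →+* S := g'.comp (DR'.frobenius hp)
  algebraize [f, σ, σ.comp f]
  have : Algebra.FormallyUnramified (R ⧸ I) (R' ⧸ I.map (algebraMap R R')) :=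
    RingHom.formallyUnramified_algebraMap.mp hunramified
  let J : Ideal S := I.map (g'.comp f)
  have hpJ : (p : S) ∈ J := map_natCast (g'.comp f) p ▸ Ideal.mem_map_of_mem _ hpI
  have frobenius_f (r : R) : DR'.frobenius hp (f r) = f (DR.frobenius hp r) := by
    simp only [DeltaStructure.frobenius_apply, hf, map_add, map_pow, map_mul, map_natCast]
  have hIJ : I.map (σ.comp f) ≤ J := Ideal.map_le_iff_le_comap.mpr fun r hr => by
    have := Ideal.mem_map_of_mem (g'.comp f) (DR.frobenius_mem hp hpI hr)
    rwa [RingHom.comp_apply, ← frobenius_f] at this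
  have hτ (a : R') : DS.frobenius hp (g' a) - σ a ∈ J := by
    rw [RingHom.comp_apply, frobenius_map_sub_map_frobenius]
    exact J.mul_mem_right _ hpJ
  have hbase (r : R) : deltaDefect DR' DS g' (f r) = 0 := by
    rw [deltaDefect_apply, hf, sub_eq_zero]
    exact hg r
  exact sub_eq_zero.mp <| hsep _ fun n =>
    twistedDerivation_mem_pow I hIJ hτ (deltaDefect_mul DR' DS g' hp) hbase n x

/-- Let `f : R → R'` be a δ-homomorphism of δ-rings which is `I`-adically étale for an
ideal `I` of `R` containing `p`. If `g' : R' → S` is a ring homomorphism to a δ-ring `S`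
such that `g = g' ∘ f` is a δ-homomorphism and `S` is `g(I)`-adically separated, then `g'`
is a δ-homomorphism. -/
theorem delta_hom_of_etale (p : ℕ) (hp : p.Prime)
    (R R' S : Type u) [CommRing R] [CommRing R'] [CommRing S]
    (DR : DeltaStructure p R) (DR' : DeltaStructure p R') (DS : DeltaStructure p S)
    (I : Ideal R) (hpI : (p : R) ∈ I)
    (f : R →+* R') (hf : ∀ x : R, DR'.δ (f x) = f (DR.δ x))
    (hetale : ∀ n : ℕ, 0 < n →
      letI : Algebra (R ⧸ I ^ n) (R' ⧸ (I ^ n).map f) :=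
        (Ideal.quotientMap ((I ^ n).map f) f Ideal.le_comap_map).toAlgebra
      Algebra.Etale (R ⧸ I ^ n) (R' ⧸ (I ^ n).map f))
    (g' : R' →+* S)
    (hg : ∀ x : R, DS.δ ((g'.comp f) x) = (g'.comp f) (DR.δ x))
    (hsep : ∀ x : S, (∀ n : ℕ, x ∈ (I.map (g'.comp f)) ^ n) → x = 0) :
    ∀ x : R', DS.δ (g' x) = g' (DR'.δ x) := by
  have unramified := RingHom.Etale.formallyUnramified
    (f := Ideal.quotientMap ((I ^ 1).map f) f Ideal.le_comap_map) (hetale 1 one_pos)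
  exact delta_hom_of_etale_general hp DR DR' DS I hpI f hf (pow_one I ▸ unramified) g' hg hsep
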